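/- arXiv:2301.08678 — 5 statements merged into one kernel-verified Lean document; each statement's English description precedes it below -/
import Mathlib

section
/- Let V be a complex inner product space and let J : V → V be an anti-unitary map with J ∘ J = −id. If V is finite-dimensional over ℂ, then the complex dimension of V is even; in particular V cannot have finite odd complex dimension. -/
/-!
The form `(x, y) ↦ ⟪x, J y⟫` is skew-symmetric, because
`⟪x, J y⟫ = ⟪J (J y), J x⟫ = -⟪y, J x⟫`, and nondegenerate, because `J` is injective.
Its Gram matrix `A` in an orthonormal basis satisfies `Aᵀ = -A`, so in odd dimension
`det A = -det A = 0`, and a nonzero kernel vector of `A` contradicts nondegeneracy.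
-/

open scoped InnerProductSpace

/-- If `J` is anti-unitary on a complex inner product space with `J ∘ J = -id`, and the space is
finite-dimensional over `ℂ`, then its complex dimension is even (in particular it cannot have
finite odd dimension). -/
theorem antiunitary_sq_neg_one_even_dim
    {V : Type*} [NormedAddCommGroup V] [InnerProductSpace ℂ V]
    (J : V → V)
    (hJ_add : ∀ x y : V, J (x + y) = J x + J y)
    (hJ_smul : ∀ (α : ℂ) (x : V), J (α • x) = (starRingEnd ℂ α) • J x)
    (hJ_surj : Function.Surjective J)
    (hJ_inner : ∀ x y : V, ⟪J x, J y⟫_ℂ = ⟪y, x⟫_ℂ)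
    (hJ_sq : ∀ x : V, J (J x) = -x)
    [FiniteDimensional ℂ V] :
    Even (Module.finrank ℂ V) := by
  let b := stdOrthonormalBasis ℂ V
  let A : Matrix (Fin (Module.finrank ℂ V)) (Fin (Module.finrank ℂ V)) ℂ :=
    Matrix.of fun i j => ⟪b i, J (b j)⟫_ℂ
  let L : V →ₛₗ[starRingEnd ℂ] V :=
    { toFun := J, map_add' := hJ_add, map_smul' := hJ_smul }
  have hskew : A.transpose = -A := by
    ext i j
    change ⟪b j, J (b i)⟫_ℂ = -⟪b i, J (b j)⟫_ℂ
    rw [← hJ_inner (J (b i)) (b j), hJ_sq, inner_neg_left]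
  by_contra hodd
  rw [Nat.not_even_iff_odd] at hodd
  have hdet : A.det = 0 := by
    have h := congrArg Matrix.det hskew
    rw [Matrix.det_transpose, Matrix.det_neg, Fintype.card_fin, hodd.neg_one_pow, neg_one_mul] at h
    exact self_eq_neg.mp h
  obtain ⟨v, hv, hAv⟩ := Matrix.exists_mulVec_eq_zero_iff.mpr hdet
  -- The coefficients are conjugated since `J` is conjugate-linear: `J x = ∑ j, v j • J (b j)`.
  let x : V := ∑ j, starRingEnd ℂ (v j) • b j
  have hJx : J x = ∑ j, v j • J (b j) := by
    change L x = ∑ j, v j • L (b j)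
    simp [x, map_sum]
  have hJx0 : J x = 0 := by
    apply b.repr.injective
    ext i
    have h := congrFun hAv i
    simp only [Matrix.mulVec, dotProduct, A, Matrix.of_apply, Pi.zero_apply] at h
    rw [b.repr_apply_apply, b.repr_apply_apply, hJx, inner_sum, inner_zero_right, ← h]
    simp [inner_smul_right, mul_comm]
  have hx0 : x = 0 := by
    have h0 : J 0 = 0 := map_zero L
    rw [← neg_eq_zero, ← hJ_sq, hJx0, h0]
  have hli := Fintype.linearIndependent_iff.mp b.orthonormal.linearIndependent _ hx0
  exact hv (funext fun j => by simpa using hli j)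
end

section
/- (Abstract Kramers degeneracy, part 1) Let H be a complex Hilbert space, let A : H → H be a bounded self-adjoint operator, and let θ : H → H be an anti-unitary map with θ ∘ θ = −id and θ ∘ A = A ∘ θ. If μ ∈ ℝ and v ∈ H is a nonzero vector with A v = μ v, then there exists a nonzero vector w ∈ H with A w = μ w and ⟨v, w⟩ = 0. In particular every eigenvalue of A is at least doubly degenerate. -/
open scoped InnerProductSpace

/-- Abstract Kramers degeneracy, part 1: if `θ` is an anti-unitary symmetry of a bounded
self-adjoint operator `A` with `θ ∘ θ = -id`, then any eigenvector `v` of `A` (for a real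
eigenvalue `μ`) admits another eigenvector `w` for the same eigenvalue which is orthogonal
to `v`; in particular every eigenvalue is at least doubly degenerate. -/
theorem kramers_degeneracy_orthogonal_eigenvector
    {H : Type*} [NormedAddCommGroup H] [InnerProductSpace ℂ H] [CompleteSpace H]
    (A : H →L[ℂ] H) (hA : IsSelfAdjoint A)
    (θ : H → H)
    (hθ_add : ∀ x y : H, θ (x + y) = θ x + θ y)
    (hθ_smul : ∀ (α : ℂ) (x : H), θ (α • x) = (starRingEnd ℂ α) • θ x)
    (hθ_surj : Function.Surjective θ)
    (hθ_inner : ∀ x y : H, ⟪θ x, θ y⟫_ℂ = ⟪y, x⟫_ℂ)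
    (hθ_sq : ∀ x : H, θ (θ x) = -x)
    (hθA : ∀ x : H, θ (A x) = A (θ x))
    (μ : ℝ) (v : H) (hv : v ≠ 0) (hAv : A v = (μ : ℂ) • v) :
    ∃ w : H, w ≠ 0 ∧ A w = (μ : ℂ) • w ∧ ⟪v, w⟫_ℂ = 0 := by
  refine ⟨θ v, fun h => hv ?_, ?_, ?_⟩
  · have h1 := hθ_inner v v
    rw [h, inner_zero_left] at h1
    exact inner_self_eq_zero.mp h1.symm
  · rw [← hθA, hAv, hθ_smul, Complex.conj_ofReal]
  · -- Anti-unitarity and `θ² = -1` give `⟪θ v, v⟫ = ⟪θ v, θ (θ v)⟫ = -⟪θ v, v⟫`.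
    have h := hθ_inner v (θ v)
    rw [hθ_sq, inner_neg_right] at h
    exact inner_eq_zero_symm.mp (self_eq_neg.mp h.symm)
end

section
/- (Abstract Kramers degeneracy, part 2) Let H be a complex Hilbert space, let A : H → H be a bounded self-adjoint operator, and let θ : H → H be an anti-unitary map with θ ∘ θ = −id and θ ∘ A = A ∘ θ. Then for every μ ∈ ℝ, if the eigenspace ker(A − μ·id) is finite-dimensional, its complex dimension is even. -/
/-!
`θ` commutes with `A` and `μ` is real, so `θ` restricts to a conjugate-linear map `J` of the
eigenspace `ker (A - μ)` with `J ∘ J = -id`. In a basis, `J` is `v ↦ M v̄` for a square matrix `M`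
with `M * M̄ = -1`. Taking determinants, `|det M|² = (-1) ^ n` with `n` the dimension of the
eigenspace; the left side is nonnegative, so `n` is even (`even_finrank_of_conjLinear_sq_eq_neg`).
-/

open scoped InnerProductSpace

/-- A finite-dimensional complex vector space with a quaternionic structure, i.e. a
conjugate-linear map squaring to `-1`, has even dimension. -/
theorem even_finrank_of_conjLinear_sq_eq_neg {V : Type*} [AddCommGroup V] [Module ℂ V]
    [FiniteDimensional ℂ V] (J : V →ₛₗ[starRingEnd ℂ] V) (hJ : ∀ x, J (J x) = -x) :
    Even (Module.finrank ℂ V) := by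
  let b := Module.finBasis ℂ V
  let M : Matrix (Fin (Module.finrank ℂ V)) (Fin (Module.finrank ℂ V)) ℂ :=
    Matrix.of fun i j => b.repr (J (b j)) i
  have hM : M * M.map (starRingEnd ℂ) = -1 := by
    ext k j
    have h1 : J (J (b j)) = ∑ i, (starRingEnd ℂ) (M i j) • J (b i) := by
      conv_lhs => rw [← b.sum_repr (J (b j))]
      simp only [map_sum, LinearMap.map_smulₛₗ]
      rfl
    have h2 : b.repr (-b j) k = ∑ i, (starRingEnd ℂ) (M i j) * M k i := by
      rw [← hJ, h1]
      simp [M, map_sum, Finsupp.finsetSum_apply]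
    rw [Matrix.mul_apply, Matrix.neg_apply, Matrix.one_apply]
    simp only [Matrix.map_apply, mul_comm (M k _)]
    rw [← h2]
    simp [Finsupp.single_apply, eq_comm]
  have hdet : M.det * (starRingEnd ℂ) M.det = (-1) ^ Module.finrank ℂ V := by
    have h := congrArg Matrix.det hM
    rw [Matrix.det_mul, Matrix.det_neg, Matrix.det_one, mul_one, Fintype.card_fin] at h
    rw [← h, RingHom.map_det]
    rfl
  by_contra hodd
  rw [Nat.not_even_iff_odd] at hodd
  rw [hodd.neg_one_pow, Complex.mul_conj] at hdet
  have hneg : Complex.normSq M.det = -1 := by exact_mod_cast hdet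
  linarith [Complex.normSq_nonneg M.det]

/-- Abstract Kramers degeneracy, part 2: if `θ` is an anti-unitary symmetry of a bounded
self-adjoint operator `A` with `θ ∘ θ = -id`, then every finite-dimensional eigenspace
`ker (A - μ·id)` (for `μ ∈ ℝ`) has even complex dimension. -/
theorem kramers_degeneracy_even_multiplicity
    {H : Type*} [NormedAddCommGroup H] [InnerProductSpace ℂ H] [CompleteSpace H]
    (A : H →L[ℂ] H) (hA : IsSelfAdjoint A)
    (θ : H → H)
    (hθ_add : ∀ x y : H, θ (x + y) = θ x + θ y)
    (hθ_smul : ∀ (α : ℂ) (x : H), θ (α • x) = (starRingEnd ℂ α) • θ x)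
    (hθ_surj : Function.Surjective θ)
    (hθ_inner : ∀ x y : H, ⟪θ x, θ y⟫_ℂ = ⟪y, x⟫_ℂ)
    (hθ_sq : ∀ x : H, θ (θ x) = -x)
    (hθA : ∀ x : H, θ (A x) = A (θ x))
    (μ : ℝ)
    [FiniteDimensional ℂ (LinearMap.ker ((A : H →ₗ[ℂ] H) - (μ : ℂ) • LinearMap.id))] :
    Even (Module.finrank ℂ
      (LinearMap.ker ((A : H →ₗ[ℂ] H) - (μ : ℂ) • LinearMap.id))) := by
  have hmem : ∀ x ∈ LinearMap.ker ((A : H →ₗ[ℂ] H) - (μ : ℂ) • LinearMap.id),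
      θ x ∈ LinearMap.ker ((A : H →ₗ[ℂ] H) - (μ : ℂ) • LinearMap.id) := by
    intro x hx
    have hx' : A x = (μ : ℂ) • x := by simpa [sub_eq_zero] using hx
    have hθx : A (θ x) = (μ : ℂ) • θ x := by
      rw [← hθA, hx', hθ_smul, Complex.conj_ofReal]
    simpa [sub_eq_zero] using hθx
  let J : LinearMap.ker ((A : H →ₗ[ℂ] H) - (μ : ℂ) • LinearMap.id) →ₛₗ[starRingEnd ℂ]
      LinearMap.ker ((A : H →ₗ[ℂ] H) - (μ : ℂ) • LinearMap.id) :=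
    { toFun := fun x => ⟨θ x, hmem x x.2⟩
      map_add' := fun x y => Subtype.ext (hθ_add x y)
      map_smul' := fun a x => Subtype.ext (hθ_smul a x) }
  exact even_finrank_of_conjLinear_sq_eq_neg J fun x => Subtype.ext (hθ_sq x)
end

section
/- Let S be a 3×3 real orthogonal matrix, let κ : ℝ³ → ℂ be measurable with κ(S k) = κ(k) for all k, and let ω : ℝ³ → ℝ be measurable with ω(S k) = ω(k) for all k. Assume the function k ↦ conj(κ(k))/√(2 ω(k)) is Bochner integrable on ℝ³. For x ∈ ℝ³ and b ∈ {1,2,3} define v_{x,b} : ℝ³ → ℂ³ componentwise by [v_{x,b}(y)]_a = (2π)^{−3/2} ∫_{ℝ³} exp(−i k·(x − y)) (conj(κ(k))/√(2 ω(k))) P(k)_{a,b} dk. Then for all x, y ∈ ℝ³ and b, the identity S · v_{x,b}(S⁻¹ y) = Σ_{b'=1}^{3} S_{b',b} v_{S x, b'}(y) holds (S acting on the ℂ³-valued vector entrywise by the real matrix S). -/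
/-!
The projection `P` is equivariant: `P(S k) = S P(k) Sᵀ` for orthogonal `S`
(`projMatrix_mulVec_mul`). Together with the invariance of `κ`, `ω` and of the Euclidean inner
product, this says that the integrand of `S v_{x,b}(S⁻¹ y)` at `k` is the integrand of
`Σ_{b'} S_{b',b} v_{Sx,b'}(y)` at `S k`. Since `|det S| = 1`, the substitution `k ↦ S k` preserves
Lebesgue measure (`integral_comp_mulVec`). Integrability (`integrable_vField_integrand`), which
holds as the entries of `P` are bounded, allows the finite sums to be moved under the integral.
-/

open Matrix MeasureTheory Complex Real

/-- The matrix `P(k)` with entries `P(k)_{ab} = δ_{ab} − k_a k_b / |k|²`, where `|k|` is the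
Euclidean norm of `k ∈ ℝ³`. -/
noncomputable def projMatrix (k : Fin 3 → ℝ) : Matrix (Fin 3) (Fin 3) ℝ :=
  Matrix.of fun a b => (if a = b then (1 : ℝ) else 0) - k a * k b / (∑ i, k i ^ 2)

/-- The vector field `v_{x,b}` with components
`[v_{x,b}(y)]_a = (2π)^{−3/2} ∫ e^{−i k·(x−y)} (conj κ(k)/√(2ω(k))) P(k)_{a,b} dk`. -/
noncomputable def vField (κ : (Fin 3 → ℝ) → ℂ) (ω : (Fin 3 → ℝ) → ℝ)
    (x : Fin 3 → ℝ) (b : Fin 3) (y : Fin 3 → ℝ) (a : Fin 3) : ℂ :=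
  (((2 * Real.pi) ^ (-(3 : ℝ) / 2) : ℝ) : ℂ) *
    ∫ k : Fin 3 → ℝ, Complex.exp (-Complex.I * ((k ⬝ᵥ (x - y) : ℝ) : ℂ)) *
      ((starRingEnd ℂ) (κ k) / ((Real.sqrt (2 * ω k) : ℝ) : ℂ)) *
      ((projMatrix k a b : ℝ) : ℂ)

lemma dotProduct_mulVec_mulVec {S : Matrix (Fin 3) (Fin 3) ℝ} (hS : Sᵀ * S = 1)
    (u v : Fin 3 → ℝ) : S *ᵥ u ⬝ᵥ S *ᵥ v = u ⬝ᵥ v := by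
  rw [Matrix.dotProduct_mulVec, ← Matrix.mulVec_transpose, Matrix.mulVec_mulVec, hS,
    Matrix.one_mulVec]

lemma projMatrix_eq (k : Fin 3 → ℝ) :
    projMatrix k = 1 - (k ⬝ᵥ k)⁻¹ • Matrix.vecMulVec k k := by
  ext a b
  simp [projMatrix, Matrix.one_apply, Matrix.vecMulVec_apply, dotProduct, div_eq_inv_mul, pow_two]

/-- Equivariance of the transverse projection, valid also at `k = 0`, where `projMatrix` is the
identity. -/
lemma projMatrix_mulVec_mul {S : Matrix (Fin 3) (Fin 3) ℝ} (hS : Sᵀ * S = 1) (k : Fin 3 → ℝ) :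
    projMatrix (S *ᵥ k) * S = S * projMatrix k := by
  rw [projMatrix_eq, projMatrix_eq, dotProduct_mulVec_mulVec hS, sub_mul, mul_sub, one_mul, mul_one,
    smul_mul_assoc, mul_smul_comm, Matrix.vecMulVec_mul, Matrix.mul_vecMulVec,
    ← Matrix.mulVec_transpose S (S *ᵥ k), Matrix.mulVec_mulVec, hS, Matrix.one_mulVec]

lemma abs_projMatrix_le (k : Fin 3 → ℝ) (a b : Fin 3) : |projMatrix k a b| ≤ 2 := by
  have hnn : 0 ≤ ∑ i, k i ^ 2 := Finset.sum_nonneg fun i _ => sq_nonneg _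
  have ha : k a ^ 2 ≤ ∑ i, k i ^ 2 :=
    Finset.single_le_sum (f := fun i => k i ^ 2) (fun i _ => sq_nonneg _) (Finset.mem_univ a)
  have hb : k b ^ 2 ≤ ∑ i, k i ^ 2 :=
    Finset.single_le_sum (f := fun i => k i ^ 2) (fun i _ => sq_nonneg _) (Finset.mem_univ b)
  have h1 : |k a * k b / (∑ i, k i ^ 2)| ≤ 1 := by
    rw [abs_div, abs_of_nonneg hnn]
    refine div_le_one_of_le₀ ?_ hnn
    rw [abs_le]
    constructor <;> nlinarith [sq_nonneg (k a + k b), sq_nonneg (k a - k b)]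
  have h2 : |if a = b then (1 : ℝ) else 0| ≤ 1 := by split_ifs <;> simp
  calc |projMatrix k a b|
      ≤ |if a = b then (1 : ℝ) else 0| + |k a * k b / (∑ i, k i ^ 2)| := abs_sub _ _
    _ ≤ 2 := by linarith

lemma measurable_projMatrix (a b : Fin 3) : Measurable fun k => projMatrix k a b := by
  unfold projMatrix
  simp only [Matrix.of_apply]
  fun_prop

lemma integrable_vField_integrand {g : (Fin 3 → ℝ) → ℂ} (hg : Integrable g)
    (z : Fin 3 → ℝ) (a b : Fin 3) :
    Integrable fun k : Fin 3 → ℝ => Complex.exp (-Complex.I * ((k ⬝ᵥ z : ℝ) : ℂ)) * g k *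
      ((projMatrix k a b : ℝ) : ℂ) := by
  have h1 : Integrable fun k : Fin 3 → ℝ => Complex.exp (-Complex.I * ((k ⬝ᵥ z : ℝ) : ℂ)) * g k := by
    refine hg.bdd_mul (c := 1) ?_ (Filter.Eventually.of_forall fun k => ?_)
    · simp only [dotProduct]
      exact Continuous.aestronglyMeasurable (by fun_prop)
    · simp [Complex.norm_exp]
  refine h1.mul_bdd (c := 2) ?_ (Filter.Eventually.of_forall fun k => ?_)
  · exact (Complex.measurable_ofReal.comp (measurable_projMatrix a b)).aestronglyMeasurable
  · rw [Complex.norm_real]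
    exact abs_projMatrix_le k a b

lemma integral_comp_mulVec {S : Matrix (Fin 3) (Fin 3) ℝ} (hS : Sᵀ * S = 1)
    {f : (Fin 3 → ℝ) → ℂ} (hf : Integrable f) : ∫ k, f (S *ᵥ k) = ∫ k, f k := by
  have hdet : S.det * S.det = 1 := by
    simpa using congrArg Matrix.det hS
  have hne : S.det ≠ 0 := fun h => by simp [h] at hdet
  have habs : |S.det| = 1 := by
    rcases mul_self_eq_one_iff.mp hdet with h | h <;> simp [h]
  have hmap : Measure.map (Matrix.toLin' S) volume = volume := by
    rw [Real.map_matrix_volume_pi_eq_smul_volume_pi hne, abs_inv, habs]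
    simp
  have hc : Continuous (Matrix.toLin' S) := LinearMap.continuous_of_finiteDimensional _
  calc ∫ k, f (S *ᵥ k) = ∫ k, f k ∂(Measure.map (Matrix.toLin' S) volume) := by
        rw [integral_map hc.measurable.aemeasurable (by rw [hmap]; exact hf.aestronglyMeasurable)]
        rfl
    _ = ∫ k, f k := by rw [hmap]

/-- For an orthogonal `S` with `κ(Sk) = κ(k)` and `ω(Sk) = ω(k)`,
the fields `v_{x,b}` transform as `S v_{x,b}(S⁻¹ y) = Σ_{b'} S_{b',b} v_{Sx,b'}(y)`. -/
theorem vField_rotation_covariance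
    (S : Matrix (Fin 3) (Fin 3) ℝ) (hS : Sᵀ * S = 1)
    (κ : (Fin 3 → ℝ) → ℂ) (hκ : Measurable κ)
    (hκS : ∀ k, κ (S.mulVec k) = κ k)
    (ω : (Fin 3 → ℝ) → ℝ) (hω : Measurable ω)
    (hωS : ∀ k, ω (S.mulVec k) = ω k)
    (hg : Integrable (fun k : Fin 3 → ℝ =>
      (starRingEnd ℂ) (κ k) / ((Real.sqrt (2 * ω k) : ℝ) : ℂ))) :
    ∀ (x y : Fin 3 → ℝ) (b a : Fin 3),
      ∑ a' : Fin 3, ((S a a' : ℝ) : ℂ) * vField κ ω x b (S⁻¹.mulVec y) a'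
      = ∑ b' : Fin 3, ((S b' b : ℝ) : ℂ) * vField κ ω (S.mulVec x) b' y a := by
  intro x y b a
  have hS' : S * Sᵀ = 1 := mul_eq_one_comm.mp hS
  have hint := integrable_vField_integrand hg
  have hdot (k : Fin 3 → ℝ) : k ⬝ᵥ (x - S⁻¹ *ᵥ y) = S *ᵥ k ⬝ᵥ (S *ᵥ x - y) := by
    rw [Matrix.inv_eq_left_inv hS, ← dotProduct_mulVec_mulVec hS, Matrix.mulVec_sub,
      Matrix.mulVec_mulVec, hS', Matrix.one_mulVec]
  have hP (k : Fin 3 → ℝ) : ∑ a', (S a a' : ℂ) * (projMatrix k a' b : ℂ)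
      = ∑ b', (S b' b : ℂ) * (projMatrix (S *ᵥ k) a b' : ℂ) := by
    have h := congrFun (congrFun (projMatrix_mulVec_mul hS k) a) b
    simp only [Matrix.mul_apply] at h
    simp_rw [mul_comm (S _ b : ℂ)]
    exact_mod_cast h.symm
  simp only [vField]
  simp_rw [mul_left_comm _ (((2 * Real.pi) ^ (-(3 : ℝ) / 2) : ℝ) : ℂ), ← Finset.mul_sum,
    ← integral_const_mul]
  congr 1
  rw [← integral_finsetSum _ fun a' _ => (hint _ a' b).const_mul _,
    ← integral_finsetSum _ fun b' _ => (hint _ a b').const_mul _,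
    ← integral_comp_mulVec hS (integrable_finsetSum _ fun b' _ => (hint _ a b').const_mul _)]
  congr 1
  ext k
  simp_rw [hκS, hωS, hdot, mul_left_comm (S _ _ : ℂ), ← Finset.mul_sum, hP]
end

section
/- Let V be a real vector space and B : V × V → ℝ a symmetric bilinear form which is positive semidefinite, i.e. B(f, f) ≥ 0 for all f ∈ V. Define c(f) = exp(−B(f, f)/4). Then c is a function of positive type on V: for every n ∈ ℕ, all f₁, …, fₙ ∈ V and all z₁, …, zₙ ∈ ℂ, the complex number Σ_{i,j=1}^{n} z_i · conj(z_j) · c(f_i − f_j) is real and nonnegative; equivalently, the n×n real matrix with entries c(f_i − f_j) is positive semidefinite. -/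
/-!
Polarization gives `c (f - g) = exp (-B f f / 4) * exp (-B g g / 4) * exp (B f g / 2)`, so up to a
diagonal rescaling of the coefficients the kernel is the entrywise exponential of the Gram matrix
`B (f i) (f j) / 2`. That Gram matrix is positive semidefinite; by the Schur product theorem so
are its entrywise powers (`posSemidef_entrywise_pow`), and summing the exponential series shows
that its entrywise exponential has a nonnegative quadratic form (`entrywise_exp_quadratic_nonneg`).
Complex coefficients reduce to real ones: the kernel is real and symmetric, so the form at
`z = x + i y` is the sum of the forms at `x` and at `y`.
-/

lemma posSemidef_entrywise_pow {n : ℕ} {G : Matrix (Fin n) (Fin n) ℝ} (hG : G.PosSemidef) (k : ℕ) :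
    (Matrix.of fun i j => G i j ^ k).PosSemidef := by
  induction k with
  | zero =>
    -- The zeroth entrywise power is the all-ones matrix, a rank-one Gram matrix.
    have h := Matrix.posSemidef_vecMulVec_self_star (fun _ : Fin n => (1 : ℝ))
    convert h using 1
    ext i j
    simp [Matrix.vecMulVec_apply]
  | succ k ih =>
    have h : (Matrix.of fun i j => G i j ^ (k + 1))
        = (Matrix.of fun i j => G i j ^ k).hadamard G := by
      ext i j
      simp [Matrix.hadamard_apply, pow_succ]
    rw [h]
    exact ih.hadamard hG

lemma posSemidef_quadratic_nonneg {n : ℕ} {M : Matrix (Fin n) (Fin n) ℝ} (hM : M.PosSemidef)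
    (w : Fin n → ℝ) : 0 ≤ ∑ i, ∑ j, w i * w j * M i j := by
  have h := (Matrix.posSemidef_iff_dotProduct_mulVec.mp hM).2 w
  refine h.trans_eq ?_
  simp only [dotProduct, Matrix.mulVec, Finset.mul_sum, Pi.star_apply, star_trivial]
  exact Finset.sum_congr rfl fun i _ => Finset.sum_congr rfl fun j _ => by ring

lemma entrywise_exp_quadratic_nonneg {n : ℕ} {G : Matrix (Fin n) (Fin n) ℝ} (hG : G.PosSemidef)
    (w : Fin n → ℝ) : 0 ≤ ∑ i, ∑ j, w i * w j * Real.exp (G i j) := by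
  have hs : HasSum (fun k : ℕ => ∑ i, ∑ j, w i * w j * (G i j ^ k / (k.factorial : ℝ)))
      (∑ i, ∑ j, w i * w j * Real.exp (G i j)) := by
    refine hasSum_sum fun i _ => hasSum_sum fun j _ => HasSum.mul_left _ ?_
    rw [Real.exp_eq_exp_ℝ]
    exact NormedSpace.expSeries_div_hasSum_exp (G i j)
  refine hs.nonneg fun k => ?_
  have h := div_nonneg (posSemidef_quadratic_nonneg (posSemidef_entrywise_pow hG k) w)
    (Nat.cast_nonneg (α := ℝ) k.factorial)
  simpa only [Finset.sum_div, Matrix.of_apply, mul_div_assoc] using h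

lemma posSemidef_half_gram {V : Type*} [AddCommGroup V] [Module ℝ V]
    (B : V →ₗ[ℝ] V →ₗ[ℝ] ℝ) (hsymm : ∀ f g : V, B f g = B g f) (hpos : ∀ f : V, 0 ≤ B f f)
    {n : ℕ} (f : Fin n → V) :
    (Matrix.of fun i j => B (f i) (f j) / 2 : Matrix (Fin n) (Fin n) ℝ).PosSemidef := by
  rw [Matrix.posSemidef_iff_dotProduct_mulVec]
  refine ⟨?_, fun x => ?_⟩
  · ext i j
    simp [hsymm (f i) (f j)]
  · have h := div_nonneg (hpos (∑ i, x i • f i)) (zero_le_two (α := ℝ))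
    refine h.trans_eq ?_
    simp only [dotProduct, Matrix.mulVec, Finset.mul_sum, Pi.star_apply, star_trivial,
      Matrix.of_apply, map_sum, LinearMap.sum_apply, map_smul, LinearMap.smul_apply, smul_eq_mul,
      Finset.sum_div]
    rw [Finset.sum_comm]
    exact Finset.sum_congr rfl fun i _ => Finset.sum_congr rfl fun j _ => by ring

lemma gaussian_quadratic_nonneg {V : Type*} [AddCommGroup V] [Module ℝ V]
    (B : V →ₗ[ℝ] V →ₗ[ℝ] ℝ) (hsymm : ∀ f g : V, B f g = B g f) (hpos : ∀ f : V, 0 ≤ B f f)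
    {n : ℕ} (f : Fin n → V) (w : Fin n → ℝ) :
    0 ≤ ∑ i, ∑ j, w i * w j * Real.exp (-(B (f i - f j) (f i - f j)) / 4) := by
  have h := entrywise_exp_quadratic_nonneg (posSemidef_half_gram B hsymm hpos f)
    (fun i => w i * Real.exp (-(B (f i) (f i)) / 4))
  refine h.trans_eq (Finset.sum_congr rfl fun i _ => Finset.sum_congr rfl fun j _ => ?_)
  have hexp : -(B (f i - f j) (f i - f j)) / 4
      = -(B (f i) (f i)) / 4 + -(B (f j) (f j)) / 4 + B (f i) (f j) / 2 := by
    simp only [map_sub, LinearMap.sub_apply, hsymm (f j) (f i)]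
    ring
  rw [hexp, Real.exp_add, Real.exp_add, Matrix.of_apply]
  ring


/-- If `B` is a positive semidefinite symmetric bilinear form on a real vector space `V`, then
`c(f) = exp(−B(f,f)/4)` is a function of positive type: for all `f₁, …, fₙ ∈ V` and
`z₁, …, zₙ ∈ ℂ`, the number `Σ_{i,j} z_i conj(z_j) c(f_i − f_j)` is real and nonnegative. -/
theorem exp_neg_quarter_quadratic_posdef
    {V : Type*} [AddCommGroup V] [Module ℝ V]
    (B : V →ₗ[ℝ] V →ₗ[ℝ] ℝ)
    (hsymm : ∀ f g : V, B f g = B g f)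
    (hpos : ∀ f : V, 0 ≤ B f f)
    (c : V → ℝ) (hc : ∀ f : V, c f = Real.exp (-(B f f) / 4)) :
    ∀ (n : ℕ) (f : Fin n → V) (z : Fin n → ℂ),
      (∑ i : Fin n, ∑ j : Fin n,
        z i * (starRingEnd ℂ) (z j) * ((c (f i - f j) : ℝ) : ℂ)).im = 0 ∧
      0 ≤ (∑ i : Fin n, ∑ j : Fin n,
        z i * (starRingEnd ℂ) (z j) * ((c (f i - f j) : ℝ) : ℂ)).re := by
  intro n f z
  have hcs : ∀ i j, c (f i - f j) = c (f j - f i) := fun i j => by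
    rw [hc, hc, ← neg_sub (f j) (f i)]
    simp only [map_neg, LinearMap.neg_apply, neg_neg]
  constructor
  · -- The imaginary part is antisymmetric under exchanging the two summation indices.
    have hneg : ∑ i, ∑ j, (z i * (starRingEnd ℂ) (z j) * ((c (f i - f j) : ℝ) : ℂ)).im
        = -∑ i, ∑ j, (z i * (starRingEnd ℂ) (z j) * ((c (f i - f j) : ℝ) : ℂ)).im := by
      conv_lhs => rw [Finset.sum_comm]
      simp only [← Finset.sum_neg_distrib]
      refine Finset.sum_congr rfl fun i _ => Finset.sum_congr rfl fun j _ => ?_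
      rw [hcs j i]
      simp only [Complex.mul_im, Complex.mul_re, Complex.conj_re, Complex.conj_im,
        Complex.ofReal_re, Complex.ofReal_im]
      ring
    simp only [Complex.im_sum]
    linarith
  · have h := add_nonneg (gaussian_quadratic_nonneg B hsymm hpos f fun i => (z i).re)
      (gaussian_quadratic_nonneg B hsymm hpos f fun i => (z i).im)
    refine h.trans_eq ?_
    simp only [Complex.re_sum, ← Finset.sum_add_distrib]
    refine Finset.sum_congr rfl fun i _ => Finset.sum_congr rfl fun j _ => ?_
    rw [hc]
    simp only [Complex.mul_im, Complex.mul_re, Complex.conj_re, Complex.conj_im,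
      Complex.ofReal_re, Complex.ofReal_im]
    ring
end
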